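/- Let K be a field, n ≥ 1, and let F, G, F', G' be n×n matrices over K. Define the 4n×3n block matrix Φ(F,G) with n×n blocks, whose four block rows are [I, 0, 0], [0, I, 0], [F, I, 0], [G, 0, I] (I the n×n identity). Then the following are equivalent: (1) there exist an invertible 2n×2n matrix T₀ and an invertible 3n×3n matrix Q whose lower-left n×2n block (rows 2n+1,…,3n, columns 1,…,2n) is zero, such that diag(T₀, T₀) · Φ(F,G) · Q = Φ(F',G') (here diag(T₀,T₀) is the 4n×4n block-diagonal matrix with T₀ acting on the first 2n rows and the same T₀ on the last 2n rows); (2) there exists an invertible n×n matrix T over K with F' = T F T⁻¹ and G' = T G T⁻¹. -/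

import Mathlib

/-- The `4n × 3n` block matrix `Φ(F,G)` with block rows
`[I,0,0], [0,I,0], [F,I,0], [G,0,I]`.  Rows are indexed by
`(Fin n ⊕ Fin n) ⊕ (Fin n ⊕ Fin n)` (first `2n` rows, last `2n` rows) and columns
by `(Fin n ⊕ Fin n) ⊕ Fin n` (first `2n` columns, last `n` columns). -/
def PhiBlock {K : Type} [Field K] {n : ℕ} (F G : Matrix (Fin n) (Fin n) K) :
    Matrix ((Fin n ⊕ Fin n) ⊕ (Fin n ⊕ Fin n)) ((Fin n ⊕ Fin n) ⊕ Fin n) K :=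
  Matrix.fromBlocks 1 0 (Matrix.fromBlocks F 1 G 0) (Matrix.fromRows 0 1)

/-- `Φ(F,G)` can be transformed into `Φ(F',G')` by multiplying both `2n`-row
horizontal stripes on the left by the same invertible matrix `T₀` and on the right
by an invertible `3n × 3n` matrix `Q` whose lower-left `n × 2n` block is zero, if
and only if the pairs `(F,G)` and `(F',G')` are simultaneously conjugate. -/
theorem stmt_8 (K : Type) [Field K] (n : ℕ) (hn : 1 ≤ n)
    (F G F' G' : Matrix (Fin n) (Fin n) K) :
    (∃ (T₀ : Matrix (Fin n ⊕ Fin n) (Fin n ⊕ Fin n) K)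
       (Q : Matrix ((Fin n ⊕ Fin n) ⊕ Fin n) ((Fin n ⊕ Fin n) ⊕ Fin n) K),
         IsUnit T₀ ∧ IsUnit Q ∧
         (∀ (i : Fin n) (j : Fin n ⊕ Fin n), Q (Sum.inr i) (Sum.inl j) = 0) ∧
         Matrix.fromBlocks T₀ 0 0 T₀ * PhiBlock F G * Q = PhiBlock F' G') ↔
    (∃ T : Matrix (Fin n) (Fin n) K,
       IsUnit T ∧ F' = T * F * T⁻¹ ∧ G' = T * G * T⁻¹) := by
  constructor
  · rintro ⟨T₀, Q, hT, -, hQ0, h⟩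
    obtain ⟨A, B, C, D, rfl⟩ : ∃ A B C D, Q = Matrix.fromBlocks A B C D :=
      ⟨_, _, _, _, (Matrix.fromBlocks_toBlocks Q).symm⟩
    have hC : C = 0 := by
      ext i j
      simpa using hQ0 i j
    subst hC
    unfold PhiBlock at h
    rw [Matrix.fromBlocks_multiply, Matrix.fromBlocks_multiply, Matrix.fromBlocks_inj] at h
    simp only [Matrix.mul_one, Matrix.mul_zero, Matrix.zero_mul, add_zero, zero_add] at h
    obtain ⟨h1, h2, h3, h4⟩ := h
    have h1' : A * T₀ = 1 := mul_eq_one_comm.mp h1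
    have hB : B = 0 := by
      calc B = (A * T₀) * B := by rw [h1', Matrix.one_mul]
        _ = 0 := by rw [Matrix.mul_assoc, h2, Matrix.mul_zero]
    subst hB
    have h5 : T₀ * Matrix.fromBlocks F 1 G 0 = Matrix.fromBlocks F' 1 G' 0 * T₀ := by
      rw [← h3, Matrix.mul_assoc _ A, h1', Matrix.mul_one]
    obtain ⟨a, b, c, d, rfl⟩ : ∃ a b c d, T₀ = Matrix.fromBlocks a b c d :=
      ⟨_, _, _, _, (Matrix.fromBlocks_toBlocks T₀).symm⟩
    rw [Matrix.mul_zero, zero_add, Matrix.fromBlocks_mul_fromRows, Matrix.fromRows_mul,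
      Matrix.fromRows_inj.eq_iff] at h4
    simp only [Matrix.mul_one, Matrix.mul_zero, zero_add, Prod.mk.injEq] at h4
    obtain ⟨h6, h7⟩ := h4
    have h7' : D * d = 1 := mul_eq_one_comm.mp h7
    have hb : b = 0 := by
      calc b = b * (D * d) := by rw [h7', Matrix.mul_one]
        _ = 0 := by rw [← Matrix.mul_assoc, h6, Matrix.zero_mul]
    subst hb
    rw [Matrix.fromBlocks_multiply, Matrix.fromBlocks_multiply, Matrix.fromBlocks_inj] at h5
    simp only [Matrix.mul_one, Matrix.one_mul, Matrix.mul_zero, Matrix.zero_mul, add_zero,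
      zero_add] at h5
    obtain ⟨e1, e2, e3, e4⟩ := h5
    subst e4 e2
    have hu : IsUnit a := ⟨⟨a, D, h7, h7'⟩, rfl⟩
    have hd := (Matrix.isUnit_iff_isUnit_det a).mp hu
    simp only [Matrix.zero_mul, zero_add, add_zero] at e1 e3
    refine ⟨a, hu, ?_, ?_⟩
    · rw [e1, Matrix.mul_nonsing_inv_cancel_right _ _ hd]
    · rw [e3, Matrix.mul_nonsing_inv_cancel_right _ _ hd]
  · rintro ⟨T, hT, rfl, rfl⟩
    have hd := (Matrix.isUnit_iff_isUnit_det T).mp hT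
    have r := Matrix.mul_nonsing_inv T hd
    have l := Matrix.nonsing_inv_mul T hd
    refine ⟨Matrix.fromBlocks T 0 0 T,
      Matrix.fromBlocks (Matrix.fromBlocks T⁻¹ 0 0 T⁻¹) 0 0 T⁻¹, ?_, ?_, ?_, ?_⟩
    · refine ⟨⟨Matrix.fromBlocks T 0 0 T, Matrix.fromBlocks T⁻¹ 0 0 T⁻¹, ?_, ?_⟩, rfl⟩ <;>
        simp [Matrix.fromBlocks_multiply, r, l]
    · refine ⟨⟨Matrix.fromBlocks (Matrix.fromBlocks T⁻¹ 0 0 T⁻¹) 0 0 T⁻¹,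
        Matrix.fromBlocks (Matrix.fromBlocks T 0 0 T) 0 0 T, ?_, ?_⟩, rfl⟩ <;>
        simp [Matrix.fromBlocks_multiply, r, l]
    · intro i j
      simp
    · simp [PhiBlock, Matrix.fromBlocks_multiply, Matrix.fromBlocks_mul_fromRows,
        Matrix.fromRows_mul, r]
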